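/- Let (A,G,α) be a C*-dynamical system with G discrete, A unital with faithful tracial state τ, α τ-preserving, and τ' = τ∘E. Let (F_i)_{i∈I} be a net of completely positive Herz-Schur (A,G,α)-multipliers such that each F_i(e) is unital and τ∘F_i(e) ≤ τ. Then ||S_{F_i}(x) − x||_{2,τ'} → 0 for all x ∈ A⋊_{α,r}G if and only if ||F_i(t)(a) − a||_{2,τ} → 0 for all t ∈ G and a ∈ A. -/

import Mathlib

noncomputable section

open scoped ComplexOrder
open Matrix
open scoped ENNReal

/-- Positivity of a matrix over a (possibly non-unital) C*-algebra:
`M` is positive iff it factors as `Nᴴ * N`. -/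
def MatPos {R : Type*} [NonUnitalSemiring R] [StarRing R] {ν : Type*} [Fintype ν]
    (M : Matrix ν ν R) : Prop :=
  ∃ N : Matrix ν ν R, M = Nᴴ * N

/-- A linear map between C*-algebras is completely positive if all its matrix
amplifications preserve positivity. -/
def IsCompletelyPositive {R S : Type*} [NonUnitalSemiring R] [StarRing R] [Module ℂ R]
    [NonUnitalSemiring S] [StarRing S] [Module ℂ S] (Φ : R →ₗ[ℂ] S) : Prop :=
  ∀ (n : ℕ) (M : Matrix (Fin n) (Fin n) R), MatPos M → MatPos (M.map Φ)

variable {H : Type*} [NormedAddCommGroup H] [InnerProductSpace ℂ H] [CompleteSpace H]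

/-- The bounded operator on the Hilbert space `H ⊕₂ ⋯ ⊕₂ H` associated to an
operator-valued `n × n` matrix. -/
def matOp {ν : Type*} [Fintype ν] (M : Matrix ν ν (H →L[ℂ] H)) :
    PiLp 2 (fun _ : ν => H) →L[ℂ] PiLp 2 (fun _ : ν => H) :=
  ((PiLp.continuousLinearEquiv 2 ℂ (fun _ : ν => H)).symm :
      (∀ _ : ν, H) →L[ℂ] PiLp 2 (fun _ : ν => H)) ∘L
    (ContinuousLinearMap.pi fun i =>
      (∑ j, (M i j) ∘L (ContinuousLinearMap.proj j)) ∘L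
        ((PiLp.continuousLinearEquiv 2 ℂ (fun _ : ν => H)) :
          PiLp 2 (fun _ : ν => H) →L[ℂ] ∀ _ : ν, H))

variable {H : Type*} [NormedAddCommGroup H] [InnerProductSpace ℂ H] [CompleteSpace H]
variable {X : Type*}

/-- Evaluation at a point, as a continuous linear map `ℓ²(X,H) → H`. -/
def lpEval (x : X) : lp (fun _ : X => H) 2 →L[ℂ] H :=
  LinearMap.mkContinuous
    { toFun := fun f => f x
      map_add' := fun f g => by
        have := lp.coeFn_add f g
        exact congrFun this x
      map_smul' := fun c f => by
        have := lp.coeFn_smul c f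
        exact congrFun this x }
    1 (fun f => by
      simpa using lp.norm_apply_le_norm (by norm_num) f x)

/-- Inclusion of the `x`-th coordinate, as a continuous linear map `H → ℓ²(X,H)`. -/
def lpSingle (x : X) : H →L[ℂ] lp (fun _ : X => H) 2 := by
  classical
  exact LinearMap.mkContinuous
    { toFun := fun ξ => lp.single 2 x ξ
      map_add' := fun ξ η => by
        apply lp.ext
        funext j
        by_cases h : j = x
        · subst h; simp [lp.single_apply_self]
        · simp [lp.single_apply_ne _ _ _ h, lp.coeFn_add]
      map_smul' := fun c ξ => by simp [lp.single_smul] }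
    1 (fun ξ => by
      simpa using (lp.norm_single (p := 2) (by norm_num)
        (fun _ : X => ξ) x).le)

/-- The elementary operator `e_{x,y} ⊗ T` on `ℓ²(X,H)`. -/
def elemOp (x y : X) (T : H →L[ℂ] H) :
    lp (fun _ : X => H) 2 →L[ℂ] lp (fun _ : X => H) 2 :=
  (lpSingle x) ∘L T ∘L (lpEval y)

/-- The operator `T_k` on `ℓ²(X,H)` associated with a finitely supported kernel
`k : X × X → B(H)`; it is (defined to be) `0` if `k` is not finitely supported. -/
def TOp (k : X × X → (H →L[ℂ] H)) :
    lp (fun _ : X => H) 2 →L[ℂ] lp (fun _ : X => H) 2 :=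
  ∑ᶠ (p : X × X), elemOp p.1 p.2 (k p)

variable {G : Type*} [Group G]

/-- The left regular translation `λ_t` on `ℓ²(G,H)`. -/
def lam (t : G) : lp (fun _ : G => H) 2 →L[ℂ] lp (fun _ : G => H) 2 :=
  LinearMap.mkContinuous
    { toFun := fun f =>
        ⟨fun s => f (t⁻¹ * s), by
          apply memℓp_gen
          have hf : Summable fun s => ‖f s‖ ^ (2 : ℝ≥0∞).toReal :=
            (lp.memℓp f).summable (by norm_num)
          exact ((Equiv.mulLeft t⁻¹).summable_iff
            (f := fun s => ‖f s‖ ^ (2 : ℝ≥0∞).toReal)).2 hf⟩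
      map_add' := fun f g => by
        apply lp.ext; funext s
        exact congrFun (lp.coeFn_add f g) (t⁻¹ * s)
      map_smul' := fun c f => by
        apply lp.ext; funext s
        exact congrFun (lp.coeFn_smul c f) (t⁻¹ * s) }
    1 (fun f => by
      rw [one_mul]
      refine lp.norm_le_of_tsum_le (by norm_num) (norm_nonneg f) ?_
      have h1 : ∑' (s : G), ‖f (t⁻¹ * s)‖ ^ (2 : ℝ≥0∞).toReal
          = ∑' (s : G), ‖f s‖ ^ (2 : ℝ≥0∞).toReal :=
        (Equiv.mulLeft t⁻¹).tsum_eq (fun s => ‖f s‖ ^ (2 : ℝ≥0∞).toReal)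
      show ∑' (s : G), ‖f (t⁻¹ * s)‖ ^ (2 : ℝ≥0∞).toReal ≤ ‖f‖ ^ (2 : ℝ≥0∞).toReal
      rw [h1, ← lp.norm_rpow_eq_tsum (by norm_num) f])

/-- The diagonal ("block multiplication") operator on `ℓ²(X,H)` associated with a
uniformly bounded family of operators. -/
def diagOp (T : X → (H →L[ℂ] H)) (C : ℝ) (hC : ∀ x, ‖T x‖ ≤ C) :
    lp (fun _ : X => H) 2 →L[ℂ] lp (fun _ : X => H) 2 := by
  have hC' : ∀ x, ‖T x‖ ≤ max C 0 := fun x => (hC x).trans (le_max_left _ _)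
  have hr : (0:ℝ) < (2 : ℝ≥0∞).toReal := by norm_num
  have key : ∀ (f : lp (fun _ : X => H) 2) (x : X),
      ‖T x (f x)‖ ^ (2 : ℝ≥0∞).toReal
        ≤ (max C 0) ^ (2 : ℝ≥0∞).toReal * ‖f x‖ ^ (2 : ℝ≥0∞).toReal := by
    intro f x
    have h1 : ‖T x (f x)‖ ≤ max C 0 * ‖f x‖ :=
      ((T x).le_opNorm (f x)).trans
        (mul_le_mul_of_nonneg_right (hC' x) (norm_nonneg _))
    calc ‖T x (f x)‖ ^ (2 : ℝ≥0∞).toReal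
        ≤ (max C 0 * ‖f x‖) ^ (2 : ℝ≥0∞).toReal :=
          Real.rpow_le_rpow (norm_nonneg _) h1 hr.le
      _ = (max C 0) ^ (2 : ℝ≥0∞).toReal * ‖f x‖ ^ (2 : ℝ≥0∞).toReal :=
          Real.mul_rpow (le_max_right _ _) (norm_nonneg _)
  have mem : ∀ f : lp (fun _ : X => H) 2, Memℓp (fun x => T x (f x)) 2 := by
    intro f
    apply memℓp_gen
    exact Summable.of_nonneg_of_le
      (fun x => Real.rpow_nonneg (norm_nonneg _) _) (key f)
      (((lp.memℓp f).summable hr).mul_left _)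
  exact LinearMap.mkContinuous
    { toFun := fun f => ⟨fun x => T x (f x), mem f⟩
      map_add' := fun f g => by
        apply lp.ext; funext x
        have := congrFun (lp.coeFn_add f g) x
        show T x ((f + g) x) = _
        rw [this]
        exact map_add (T x) (f x) (g x)
      map_smul' := fun c f => by
        apply lp.ext; funext x
        have := congrFun (lp.coeFn_smul c f) x
        show T x ((c • f) x) = _
        rw [this]
        simp [lp.coeFn_smul] }
    (max C 0) (fun f => by
      refine lp.norm_le_of_tsum_le hr (by positivity) ?_
      show ∑' (x : X), ‖T x (f x)‖ ^ (2 : ℝ≥0∞).toReal ≤ _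
      calc ∑' (x : X), ‖T x (f x)‖ ^ (2 : ℝ≥0∞).toReal
          ≤ ∑' (x : X), (max C 0) ^ (2 : ℝ≥0∞).toReal * ‖f x‖ ^ (2 : ℝ≥0∞).toReal :=
            Summable.tsum_le_tsum (key f)
              (Summable.of_nonneg_of_le
                (fun x => Real.rpow_nonneg (norm_nonneg _) _) (key f)
                (((lp.memℓp f).summable hr).mul_left _))
              (((lp.memℓp f).summable hr).mul_left _)
        _ = (max C 0) ^ (2 : ℝ≥0∞).toReal * ∑' (x : X), ‖f x‖ ^ (2 : ℝ≥0∞).toReal :=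
            tsum_mul_left
        _ = (max C 0) ^ (2 : ℝ≥0∞).toReal * ‖f‖ ^ (2 : ℝ≥0∞).toReal := by
            rw [lp.norm_rpow_eq_tsum hr]
        _ = (max C 0 * ‖f‖) ^ (2 : ℝ≥0∞).toReal :=
            (Real.mul_rpow (by positivity) (norm_nonneg _)).symm)

section CB

variable {A' B' : Type*} [AddCommMonoid A'] [Module ℂ A'] [AddCommMonoid B'] [Module ℂ B']
variable {K : Type*} [NormedAddCommGroup K] [InnerProductSpace ℂ K] [CompleteSpace K]

/-- All matrix amplifications of `Φ` are bounded by `C`, where matrices over the abstract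
spaces are normed through the given embeddings into concrete operator algebras. -/
def CBBound (ιA : A' → (H →L[ℂ] H)) (ιB : B' → (K →L[ℂ] K))
    (Φ : A' →ₗ[ℂ] B') (C : ℝ) : Prop :=
  ∀ (n : ℕ) (M : Matrix (Fin n) (Fin n) A'),
    ‖matOp (M.map (fun a => ιB (Φ a)))‖ ≤ C * ‖matOp (M.map ιA)‖

/-- Complete boundedness of a linear map, relative to embeddings of its domain and
codomain into concrete operator algebras. -/
def IsCB (ιA : A' → (H →L[ℂ] H)) (ιB : B' → (K →L[ℂ] K)) (Φ : A' →ₗ[ℂ] B') : Prop :=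
  ∃ C : ℝ, 0 ≤ C ∧ CBBound ιA ιB Φ C

/-- The completely bounded norm of a linear map, relative to embeddings of its domain
and codomain into concrete operator algebras. -/
def cbNorm (ιA : A' → (H →L[ℂ] H)) (ιB : B' → (K →L[ℂ] K)) (Φ : A' →ₗ[ℂ] B') : ℝ :=
  sInf { C : ℝ | 0 ≤ C ∧ CBBound ιA ιB Φ C }

end CB

section Schur

variable {A : Type*} [NonUnitalCStarAlgebra A]

/-- A *-representation is non-degenerate if the span of the vectors in its range is dense. -/
def NondegenerateRep {K : Type*} [NormedAddCommGroup K] [InnerProductSpace ℂ K]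
    [CompleteSpace K] (ρ : A →⋆ₙₐ[ℂ] (K →L[ℂ] K)) : Prop :=
  Dense (Submodule.span ℂ {ξ : K | ∃ (a : A) (v : K), ρ a v = ξ} : Set K)

/-- A function `φ : X × X → CB(A, B(H))` is of positive type if it maps positive
matrices to positive matrices, entrywise. -/
def PositiveType (φ : X → X → (A →ₗ[ℂ] (H →L[ℂ] H))) : Prop :=
  ∀ (m : ℕ) (x : Fin m → X) (a : Matrix (Fin m) (Fin m) A),
    MatPos a → MatPos (Matrix.of fun p q => φ (x p) (x q) (a p q))

/-- A kernel `k : X × X → A` is positive definite if all the matrices obtained by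
sampling it at finitely many points are positive. -/
def PosDefKernel (k : X × X → A) : Prop :=
  ∀ (n : ℕ) (x : Fin n → X), MatPos (Matrix.of fun i j => k (x i, x j))

/-- The operator `T_k` on `ℓ²(X,H)` of a kernel `k : X × X → A`, via the embedding
`ι : A → B(H)` (it is `0` unless `k` is finitely supported). -/
def TKer (ι : A →⋆ₙₐ[ℂ] (H →L[ℂ] H)) (k : X × X → A) :
    lp (fun _ : X => H) 2 →L[ℂ] lp (fun _ : X => H) 2 :=
  TOp (fun p => ι (k p))

/-- `C` is a complete bound for the Schur multiplication map `S_φ : T_k ↦ T_{φ·k}`,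
tested on (matrices of) finitely supported kernels, which span a dense subspace of
`K(ℓ²(X)) ⊗ A`. -/
def SchurBound (ι : A →⋆ₙₐ[ℂ] (H →L[ℂ] H)) (φ : X → X → (A →ₗ[ℂ] (H →L[ℂ] H)))
    (C : ℝ) : Prop :=
  ∀ (n : ℕ) (k : Fin n → Fin n → (X × X → A)),
    (∀ i j, (Function.support (k i j)).Finite) →
    ‖matOp (Matrix.of fun i j => TOp (fun p => φ p.1 p.2 (k i j p)))‖
      ≤ C * ‖matOp (Matrix.of fun i j => TKer ι (k i j))‖

/-- `φ` is a Schur `A`-multiplier: the map `S_φ : T_k ↦ T_{φ·k}` is completely bounded. -/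
def IsSchurMultiplier (ι : A →⋆ₙₐ[ℂ] (H →L[ℂ] H))
    (φ : X → X → (A →ₗ[ℂ] (H →L[ℂ] H))) : Prop :=
  ∃ C : ℝ, 0 ≤ C ∧ SchurBound ι φ C

/-- The multiplier norm `‖φ‖_m = ‖S_φ‖_cb` of a Schur `A`-multiplier. -/
def schurNorm (ι : A →⋆ₙₐ[ℂ] (H →L[ℂ] H))
    (φ : X → X → (A →ₗ[ℂ] (H →L[ℂ] H))) : ℝ :=
  sInf { C : ℝ | 0 ≤ C ∧ SchurBound ι φ C }

/-- Complete positivity of the map `S_φ : K(ℓ²(X)) ⊗ A → K(ℓ²(X)) ⊗ B(H)`, tested on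
(matrices of) finitely supported kernels. -/
def SchurCP (ι : A →⋆ₙₐ[ℂ] (H →L[ℂ] H)) (φ : X → X → (A →ₗ[ℂ] (H →L[ℂ] H))) : Prop :=
  ∀ (n : ℕ) (k : Fin n → Fin n → (X × X → A)),
    (∀ i j, (Function.support (k i j)).Finite) →
    MatPos (Matrix.of fun i j => TKer ι (k i j)) →
    MatPos (Matrix.of fun i j => TOp (fun p => φ p.1 p.2 (k i j p)))

end Schur

section Dynamics

variable {A : Type*} [NonUnitalCStarAlgebra A]

/-- `α` is an action of the group `G` on `A` by *-automorphisms. -/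
def IsAction (α : G → A ≃⋆ₐ[ℂ] A) : Prop :=
  (∀ a, α 1 a = a) ∧ ∀ s t : G, ∀ a : A, α (s * t) a = α s (α t a)

/-- A *-automorphism of `A`, as a `ℂ`-linear map. -/
def autLin (e : A ≃⋆ₐ[ℂ] A) : A →ₗ[ℂ] A :=
  { toFun := e
    map_add' := fun a b => map_add e a b
    map_smul' := fun c a => map_smul e c a }

/-- The representation `π` of `A` on `ℓ²(G,H)`: `(π(a)ξ)(s) = α_{s⁻¹}(a)(ξ(s))`. -/
def piRep (ι : A →⋆ₙₐ[ℂ] (H →L[ℂ] H)) (α : G → A ≃⋆ₐ[ℂ] A) (a : A) :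
    lp (fun _ : G => H) 2 →L[ℂ] lp (fun _ : G => H) 2 :=
  diagOp (fun s => ι (α s⁻¹ a)) ‖a‖ (fun s =>
    (NonUnitalStarAlgHom.norm_apply_le ι (α s⁻¹ a)).trans_eq
      (StarAlgEquiv.norm_map (α s⁻¹) a))

/-- The reduced crossed product `A ⋊_{α,r} G`, realised concretely on `ℓ²(G,H)` as the
norm closure of the linear span of the operators `π(a)λ_t`. -/
def CrossedSet (ι : A →⋆ₙₐ[ℂ] (H →L[ℂ] H)) (α : G → A ≃⋆ₐ[ℂ] A) :
    Set (lp (fun _ : G => H) 2 →L[ℂ] lp (fun _ : G => H) 2) :=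
  closure (Submodule.span ℂ
    {x | ∃ (a : A) (t : G), x = piRep ι α a * lam t} : Set _)

/-- `E` is the canonical conditional expectation of the reduced crossed product onto `A`:
it is characterised by `ι (E x) = (x)_{e,e}`, the `(e,e)` matrix entry of `x`. -/
def IsCondExp (ι : A →⋆ₙₐ[ℂ] (H →L[ℂ] H)) (α : G → A ≃⋆ₐ[ℂ] A)
    (E : (lp (fun _ : G => H) 2 →L[ℂ] lp (fun _ : G => H) 2) →ₗ[ℂ] A) : Prop :=
  ∀ x ∈ CrossedSet ι α, ι (E x) = (lpEval (1 : G)) ∘L x ∘L (lpSingle (1 : G))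

/-- The defining property of the map `S_F` associated with `F : G → CB(A)`:
`S_F(π(a)λ_s) = π(F(s)(a))λ_s`. -/
def HSGenProp (ι : A →⋆ₙₐ[ℂ] (H →L[ℂ] H)) (α : G → A ≃⋆ₐ[ℂ] A)
    (F : G → (A →ₗ[ℂ] A))
    (Φ : (lp (fun _ : G => H) 2 →L[ℂ] lp (fun _ : G => H) 2) →ₗ[ℂ]
         (lp (fun _ : G => H) 2 →L[ℂ] lp (fun _ : G => H) 2)) : Prop :=
  ∀ (a : A) (s : G), Φ (piRep ι α a * lam s) = piRep ι α (F s a) * lam s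

/-- `Φ` maps the reduced crossed product into itself and, on matrices over the reduced
crossed product, all amplifications of `Φ` are bounded by `C`. -/
def CBBoundOnCrossed (ι : A →⋆ₙₐ[ℂ] (H →L[ℂ] H)) (α : G → A ≃⋆ₐ[ℂ] A)
    (Φ : (lp (fun _ : G => H) 2 →L[ℂ] lp (fun _ : G => H) 2) →ₗ[ℂ]
         (lp (fun _ : G => H) 2 →L[ℂ] lp (fun _ : G => H) 2)) (C : ℝ) : Prop :=
  ∀ (n : ℕ) (M : Matrix (Fin n) (Fin n)
      (lp (fun _ : G => H) 2 →L[ℂ] lp (fun _ : G => H) 2)),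
    (∀ i j, M i j ∈ CrossedSet ι α) →
      ‖matOp (M.map Φ)‖ ≤ C * ‖matOp M‖

/-- `Φ` is completely positive on the reduced crossed product: matrices over the crossed
product which are positive are mapped to positive matrices. -/
def CPOnCrossed (ι : A →⋆ₙₐ[ℂ] (H →L[ℂ] H)) (α : G → A ≃⋆ₐ[ℂ] A)
    (Φ : (lp (fun _ : G => H) 2 →L[ℂ] lp (fun _ : G => H) 2) →ₗ[ℂ]
         (lp (fun _ : G => H) 2 →L[ℂ] lp (fun _ : G => H) 2)) : Prop :=
  (∀ x ∈ CrossedSet ι α, Φ x ∈ CrossedSet ι α) ∧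
  ∀ (n : ℕ) (M : Matrix (Fin n) (Fin n)
      (lp (fun _ : G => H) 2 →L[ℂ] lp (fun _ : G => H) 2)),
    (∀ i j, M i j ∈ CrossedSet ι α) → MatPos M → MatPos (M.map Φ)

/-- `F : G → CB(A)` is a Herz-Schur `(A,G,α)`-multiplier: the map `S_F` determined by
`S_F(π(a)λ_s) = π(F(s)(a))λ_s` extends to a completely bounded map on `A ⋊_{α,r} G`. -/
def IsHerzSchurMultiplier (ι : A →⋆ₙₐ[ℂ] (H →L[ℂ] H)) (α : G → A ≃⋆ₐ[ℂ] A)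
    (F : G → (A →ₗ[ℂ] A)) : Prop :=
  ∃ Φ, HSGenProp ι α F Φ ∧ (∀ x ∈ CrossedSet ι α, Φ x ∈ CrossedSet ι α) ∧
    ∃ C : ℝ, 0 ≤ C ∧ CBBoundOnCrossed ι α Φ C

/-- `F : G → CB(A)` is a completely positive Herz-Schur `(A,G,α)`-multiplier: the map
`S_F` extends to a completely positive (hence completely bounded) map on `A ⋊_{α,r} G`. -/
def IsHerzSchurMultiplierCP (ι : A →⋆ₙₐ[ℂ] (H →L[ℂ] H)) (α : G → A ≃⋆ₐ[ℂ] A)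
    (F : G → (A →ₗ[ℂ] A)) : Prop :=
  ∃ Φ, HSGenProp ι α F Φ ∧ CPOnCrossed ι α Φ ∧
    ∃ C : ℝ, 0 ≤ C ∧ CBBoundOnCrossed ι α Φ C

/-- The function `N(F) : G × G → CB(A)`, `N(F)(s,t)(a) = α_{s⁻¹}(F(st⁻¹)(α_s(a)))`. -/
def NF (α : G → A ≃⋆ₐ[ℂ] A) (F : G → (A →ₗ[ℂ] A)) : G → G → (A →ₗ[ℂ] A) :=
  fun s t => (autLin (α s⁻¹)) ∘ₗ (F (s * t⁻¹)) ∘ₗ (autLin (α s))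

end Dynamics

section Trace

variable {A : Type*} [NonUnitalCStarAlgebra A]

/-- `τ` is a positive linear functional. -/
def IsPositiveFunctional (τ : A →ₗ[ℂ] ℂ) : Prop :=
  ∀ a : A, 0 ≤ τ (star a * a)

/-- `τ` is tracial. -/
def IsTracial (τ : A →ₗ[ℂ] ℂ) : Prop :=
  ∀ a b : A, τ (a * b) = τ (b * a)

/-- `τ` is faithful. -/
def IsFaithfulFunctional (τ : A →ₗ[ℂ] ℂ) : Prop :=
  ∀ a : A, τ (star a * a) = 0 → a = 0

/-- The `L²`-norm `‖a‖_{2,τ} = τ(a*a)^{1/2}` associated with a positive functional `τ`. -/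
def l2norm (τ : A →ₗ[ℂ] ℂ) (a : A) : ℝ :=
  Real.sqrt (τ (star a * a)).re

/-- A map `Φ : A → A` is `L²`-bounded by `C` with respect to `τ`. -/
def L2BoundedBy (τ : A →ₗ[ℂ] ℂ) (Φ : A →ₗ[ℂ] A) (C : ℝ) : Prop :=
  ∀ a : A, l2norm τ (Φ a) ≤ C * l2norm τ a

/-- A map `Φ : A → A` is `L²`-bounded with respect to `τ`, i.e. it extends to a bounded
operator `T_Φ` on `L²(A,τ)`. -/
def L2Bounded (τ : A →ₗ[ℂ] ℂ) (Φ : A →ₗ[ℂ] A) : Prop :=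
  ∃ C : ℝ, 0 ≤ C ∧ L2BoundedBy τ Φ C

/-- The norm of the extension `T_Φ` of `Φ` to `L²(A,τ)`. -/
def l2OpNorm (τ : A →ₗ[ℂ] ℂ) (Φ : A →ₗ[ℂ] A) : ℝ :=
  sInf { C : ℝ | 0 ≤ C ∧ L2BoundedBy τ Φ C }

/-- `Φ` is `L²`-compact with respect to `τ`: the image under `Φ` of the `L²`-unit ball of
`A` is totally bounded in the `L²`-norm; equivalently, the extension `T_Φ` of `Φ` to
`L²(A,τ)` is a compact operator. -/
def L2Compact (τ : A →ₗ[ℂ] ℂ) (Φ : A →ₗ[ℂ] A) : Prop :=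
  ∀ ε : ℝ, 0 < ε → ∃ S : Finset A, ∀ a : A, l2norm τ a ≤ 1 →
    ∃ b ∈ S, l2norm τ (Φ a - b) < ε

end Trace

section Props

variable {A : Type*} [CStarAlgebra A]

/-- The pair `(A,τ)` has the C*-algebra Haagerup property (Definition 3.1, Dong). -/
def CStarHaagerup (τ : A →ₗ[ℂ] ℂ) : Prop :=
  ∃ (I : Type) (_ : Nonempty I) (_ : SemilatticeSup I) (Φ : I → (A →ₗ[ℂ] A)),
    (∀ i, Φ i 1 = 1) ∧
    (∀ i, IsCompletelyPositive (Φ i)) ∧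
    (∀ i (a : A), τ (Φ i (star a * a)) ≤ τ (star a * a)) ∧
    (∀ i, L2Compact τ (Φ i)) ∧
    (∀ a : A, Filter.Tendsto (fun i => l2norm τ (Φ i a - a)) Filter.atTop (nhds 0))

/-- `A` is a nuclear C*-algebra: there is a net of finite-rank completely positive
contractions converging to the identity in the point-norm topology. -/
def NuclearCStarAlgebra (A : Type*) [NonUnitalCStarAlgebra A] : Prop :=
  ∃ (I : Type) (_ : Nonempty I) (_ : SemilatticeSup I) (Φ : I → (A →ₗ[ℂ] A)),
    (∀ i, IsCompletelyPositive (Φ i)) ∧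
    (∀ i (a : A), ‖Φ i a‖ ≤ ‖a‖) ∧
    (∀ i, FiniteDimensional ℂ (LinearMap.range (Φ i))) ∧
    (∀ a : A, Filter.Tendsto (fun i => ‖Φ i a - a‖) Filter.atTop (nhds 0))

/-- A discrete group `G` has the Haagerup property: there is a net of normalised
positive-definite functions on `G`, vanishing at infinity, converging pointwise to `1`. -/
def GroupHaagerup (G : Type*) [Group G] : Prop :=
  ∃ (I : Type) (_ : Nonempty I) (_ : SemilatticeSup I) (φ : I → G → ℂ),
    (∀ i, φ i 1 = 1) ∧
    (∀ i (n : ℕ) (s : Fin n → G) (μ : Fin n → ℂ),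
      0 ≤ ∑ k, ∑ l, (starRingEnd ℂ) (μ k) * φ i ((s k)⁻¹ * s l) * μ l) ∧
    (∀ i, ∀ ε : ℝ, 0 < ε → ∃ S : Finset G, ∀ s ∉ S, ‖φ i s‖ ≤ ε) ∧
    (∀ s : G, Filter.Tendsto (fun i => φ i s) Filter.atTop (nhds 1))

end Props

section More

variable {A : Type*} [NonUnitalCStarAlgebra A]

/-- A star homomorphism, as a `ℂ`-linear map. -/
def iotaLin {B : Type*} [NonUnitalCStarAlgebra B] (ι : A →⋆ₙₐ[ℂ] B) : A →ₗ[ℂ] B :=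
  { toFun := ι
    map_add' := fun a b => map_add ι a b
    map_smul' := fun c a => map_smul ι c a }

/-- A function `φ : X × X → CB(A)` with values in the maps on `A` is of positive type. -/
def PositiveTypeA (φ : X → X → (A →ₗ[ℂ] A)) : Prop :=
  ∀ (m : ℕ) (x : Fin m → X) (a : Matrix (Fin m) (Fin m) A),
    MatPos a → MatPos (Matrix.of fun p q => φ (x p) (x q) (a p q))

/-- The representation `π` of `A` on `ℓ²(G,H)`, as a linear map. -/
def piRepLin (ι : A →⋆ₙₐ[ℂ] (H →L[ℂ] H)) (α : G → A ≃⋆ₐ[ℂ] A) :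
    A →ₗ[ℂ] (lp (fun _ : G => H) 2 →L[ℂ] lp (fun _ : G => H) 2) :=
  { toFun := piRep ι α
    map_add' := fun a b => by
      apply ContinuousLinearMap.ext; intro f
      apply lp.ext; funext s
      have h1 : (((piRep ι α a + piRep ι α b) f :
          lp (fun _ : G => H) 2) : ∀ _ : G, H) s
          = ((piRep ι α a f : ∀ _ : G, H) s) + ((piRep ι α b f : ∀ _ : G, H) s) := by
        rw [ContinuousLinearMap.add_apply]
        exact congrFun (lp.coeFn_add (piRep ι α a f) (piRep ι α b f)) s
      show ι (α s⁻¹ (a + b)) (f s) = _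
      rw [h1]
      show _ = ι (α s⁻¹ a) (f s) + ι (α s⁻¹ b) (f s)
      rw [map_add (α s⁻¹), map_add ι, ContinuousLinearMap.add_apply]
    map_smul' := fun c a => by
      apply ContinuousLinearMap.ext; intro f
      apply lp.ext; funext s
      have h1 : (((c • piRep ι α a) f :
          lp (fun _ : G => H) 2) : ∀ _ : G, H) s
          = c • ((piRep ι α a f : ∀ _ : G, H) s) := by
        rw [ContinuousLinearMap.smul_apply]
        exact congrFun (lp.coeFn_smul c (piRep ι α a f)) s
      show ι (α s⁻¹ (c • a)) (f s) = _
      rw [RingHom.id_apply, h1]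
      show _ = c • ι (α s⁻¹ a) (f s)
      rw [map_smul (α s⁻¹), map_smul ι, ContinuousLinearMap.smul_apply] }

/-- The completely bounded norm of a map defined on the reduced crossed product. -/
def cbNormOnCrossed (ι : A →⋆ₙₐ[ℂ] (H →L[ℂ] H)) (α : G → A ≃⋆ₐ[ℂ] A)
    (Φ : (lp (fun _ : G => H) 2 →L[ℂ] lp (fun _ : G => H) 2) →ₗ[ℂ]
         (lp (fun _ : G => H) 2 →L[ℂ] lp (fun _ : G => H) 2)) : ℝ :=
  sInf { C : ℝ | 0 ≤ C ∧ CBBoundOnCrossed ι α Φ C }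

/-- The `L²`-norm `‖x‖_{2,τ'}` on the reduced crossed product induced by the trace
`τ' = τ ∘ E`. -/
def l2normCr (τ : A →ₗ[ℂ] ℂ)
    (E : (lp (fun _ : G => H) 2 →L[ℂ] lp (fun _ : G => H) 2) →ₗ[ℂ] A)
    (x : lp (fun _ : G => H) 2 →L[ℂ] lp (fun _ : G => H) 2) : ℝ :=
  Real.sqrt (τ (E (star x * x))).re

/-- The map `h_Φ : G → CB(A)` associated with a map `Φ` on the reduced crossed product:
`h_Φ(s)(a) = E(Φ(π(a)λ_s)λ_s*)`. -/
def hMap (ι : A →⋆ₙₐ[ℂ] (H →L[ℂ] H)) (α : G → A ≃⋆ₐ[ℂ] A)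
    (E : (lp (fun _ : G => H) 2 →L[ℂ] lp (fun _ : G => H) 2) →ₗ[ℂ] A)
    (Φ : (lp (fun _ : G => H) 2 →L[ℂ] lp (fun _ : G => H) 2) →ₗ[ℂ]
         (lp (fun _ : G => H) 2 →L[ℂ] lp (fun _ : G => H) 2))
    (s : G) : A →ₗ[ℂ] A :=
  E ∘ₗ (LinearMap.mulRight ℂ (star (lam s))) ∘ₗ Φ ∘ₗ
    (LinearMap.mulRight ℂ (lam (H := H) s)) ∘ₗ piRepLin ι α

end More

section BigProps

open Filter

variable {A : Type*} [CStarAlgebra A]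

/-- The Haagerup property for the `C*`-dynamical system `(A,G,α,τ)` (Definition 3.3). -/
def DynHaagerup (ι : A →⋆ₙₐ[ℂ] (H →L[ℂ] H)) (α : G → A ≃⋆ₐ[ℂ] A)
    (τ : A →ₗ[ℂ] ℂ) : Prop :=
  ∃ (I : Type) (_ : Nonempty I) (_ : SemilatticeSup I) (F : I → G → (A →ₗ[ℂ] A)),
    (∀ i, IsHerzSchurMultiplierCP ι α (F i)) ∧
    (∀ i, F i 1 1 = 1) ∧
    (∀ i (a : A), τ (F i 1 (star a * a)) ≤ τ (star a * a)) ∧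
    (∀ i (t : G), L2Compact τ (F i t)) ∧
    (∀ i, ∀ ε : ℝ, 0 < ε → ∃ S : Finset G, ∀ s ∉ S, l2OpNorm τ (F i s) ≤ ε) ∧
    (∀ (t : G) (a : A),
      Tendsto (fun i => l2norm τ (F i t a - a)) atTop (nhds 0))

/-- The C*-algebra Haagerup property for the reduced crossed product `A ⋊_{α,r} G`
endowed with the induced trace `τ' = τ ∘ E` (Definition 3.1). -/
def CrossedCStarHaagerup (ι : A →⋆ₙₐ[ℂ] (H →L[ℂ] H)) (α : G → A ≃⋆ₐ[ℂ] A)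
    (τ : A →ₗ[ℂ] ℂ)
    (E : (lp (fun _ : G => H) 2 →L[ℂ] lp (fun _ : G => H) 2) →ₗ[ℂ] A) : Prop :=
  ∃ (I : Type) (_ : Nonempty I) (_ : SemilatticeSup I)
    (Φ : I → ((lp (fun _ : G => H) 2 →L[ℂ] lp (fun _ : G => H) 2) →ₗ[ℂ]
              (lp (fun _ : G => H) 2 →L[ℂ] lp (fun _ : G => H) 2))),
    (∀ i, Φ i 1 = 1) ∧
    (∀ i, CPOnCrossed ι α (Φ i)) ∧
    (∀ i, ∀ x ∈ CrossedSet ι α, τ (E (Φ i (star x * x))) ≤ τ (E (star x * x))) ∧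
    (∀ i, ∀ ε : ℝ, 0 < ε →
      ∃ S : Finset (lp (fun _ : G => H) 2 →L[ℂ] lp (fun _ : G => H) 2),
        ∀ x ∈ CrossedSet ι α, l2normCr τ E x ≤ 1 →
          ∃ b ∈ S, l2normCr τ E (Φ i x - b) < ε) ∧
    (∀ x ∈ CrossedSet ι α,
      Tendsto (fun i => l2normCr τ E (Φ i x - x)) atTop (nhds 0))

end BigProps

section Nuc

open Filter

variable {A : Type*} [NonUnitalCStarAlgebra A]

/-- Nuclearity of the reduced crossed product `A ⋊_{α,r} G`: there is a net of
finite-rank completely positive contractions on it converging to the identity in the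
point-norm topology. -/
def CrossedNuclear (ι : A →⋆ₙₐ[ℂ] (H →L[ℂ] H)) (α : G → A ≃⋆ₐ[ℂ] A) : Prop :=
  ∃ (I : Type) (_ : Nonempty I) (_ : SemilatticeSup I)
    (Φ : I → ((lp (fun _ : G => H) 2 →L[ℂ] lp (fun _ : G => H) 2) →ₗ[ℂ]
              (lp (fun _ : G => H) 2 →L[ℂ] lp (fun _ : G => H) 2))),
    (∀ i, CPOnCrossed ι α (Φ i)) ∧
    (∀ i, ∀ x ∈ CrossedSet ι α, ‖Φ i x‖ ≤ ‖x‖) ∧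
    (∀ i, FiniteDimensional ℂ
      (Submodule.span ℂ ((fun x => Φ i x) '' CrossedSet ι α))) ∧
    (∀ x ∈ CrossedSet ι α, Tendsto (fun i => ‖Φ i x - x‖) atTop (nhds 0))

/-- Nuclearity of the `C*`-dynamical system `(A,G,α)` (Definition 4.2): a net of
completely positive, finitely supported Herz-Schur multipliers, with `‖F_i(e)‖_cb ≤ 1`,
with finite-rank values, converging to the identity pointwise in norm. -/
def DynNuclear (ι : A →⋆ₙₐ[ℂ] (H →L[ℂ] H)) (α : G → A ≃⋆ₐ[ℂ] A) : Prop :=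
  ∃ (I : Type) (_ : Nonempty I) (_ : SemilatticeSup I) (F : I → G → (A →ₗ[ℂ] A)),
    (∀ i, IsHerzSchurMultiplierCP ι α (F i)) ∧
    (∀ i, (Function.support (F i)).Finite) ∧
    (∀ i, CBBound (fun a => ι a) (fun a => ι a) (F i 1) 1) ∧
    (∀ i (s : G), FiniteDimensional ℂ (LinearMap.range (F i s))) ∧
    (∀ (s : G) (a : A), Tendsto (fun i => ‖F i s a - a‖) atTop (nhds 0))

end Nuc

section Amen

open Filter

variable {A : Type*} [CStarAlgebra A]

/-- Amenability of the action `α` of a discrete group `G` on a unital C*-algebra `A`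
(Definition 4.5): a net of finitely supported functions `T_i : G → Z(A)⁺` with
`Σ_s T_i(s)² = 1` and `‖Σ_s (T_i(s) - α_t(T_i(t⁻¹s)))*(T_i(s) - α_t(T_i(t⁻¹s)))‖ → 0`. -/
def AmenableAction {G : Type*} [Group G] (α : G → A ≃⋆ₐ[ℂ] A) : Prop :=
  ∃ (I : Type) (_ : Nonempty I) (_ : SemilatticeSup I) (T : I → G → A),
    (∀ i, (Function.support (T i)).Finite) ∧
    (∀ i (s : G) (c : A), Commute (T i s) c) ∧
    (∀ i (s : G), ∃ b : A, T i s = star b * b) ∧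
    (∀ i, ∑ᶠ s : G, T i s * T i s = 1) ∧
    (∀ t : G, Tendsto (fun i =>
        ‖∑ᶠ s : G, star (T i s - α t (T i (t⁻¹ * s))) *
          (T i s - α t (T i (t⁻¹ * s)))‖) atTop (nhds 0))

end Amen

universe u v w

/-- Data for a Stinespring-type representation of an operator-valued function on
`X × X`: a Hilbert space `K`, a *-representation `ρ : A → B(K)` and
families of operators `V, W : X → B(H,K)`. -/
structure OpValuedRep (A : Type u) [NonUnitalCStarAlgebra A]
    (H : Type v) [NormedAddCommGroup H] [InnerProductSpace ℂ H] [CompleteSpace H]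
    (X : Type w) where
  /-- the Hilbert space of the representation -/
  K : Type (max u v w)
  [nacg : NormedAddCommGroup K]
  [ips : InnerProductSpace ℂ K]
  [cpl : CompleteSpace K]
  /-- the representation -/
  ρ : A →⋆ₙₐ[ℂ] (K →L[ℂ] K)
  /-- the left family of operators -/
  V : X → (H →L[ℂ] K)
  /-- the right family of operators -/
  W : X → (H →L[ℂ] K)

attribute [instance] OpValuedRep.nacg OpValuedRep.ips OpValuedRep.cpl

end
noncomputable section
open scoped ComplexOrder ENNReal
open Matrix
open Filter

/-!
On a generator the two `L²`-norms agree: `‖π(b) λ_t‖_{2,τ'} = ‖b‖_{2,τ}`, because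
`(π(b) λ_t)* (π(b) λ_t) = π(α_{t⁻¹}(b* b))` and `τ` is `α`-invariant. Hence the condition on `F_i`
is convergence of `S_{F_i}` on the generators. It passes to the norm closure of their span since
`S_{F_i} - id` is bounded from the operator norm to `‖·‖_{2,τ'}` uniformly in `i`: a unital
`2`-positive map is contractive, by a Schur complement argument, and a positive functional is
bounded.
-/

section Contractivity

lemma MatPos.star_mul_self_le {R : Type*} [Ring R] [PartialOrder R] [StarRing R]
    [StarOrderedRing R] {M : Matrix (Fin 2) (Fin 2) R} (hM : MatPos M) (h11 : M 1 1 = 1) :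
    star (M 1 0) * M 1 0 ≤ M 0 0 := by
  obtain ⟨N, rfl⟩ := hM
  set c := (Nᴴ * N) 1 0 with hc
  simp only [Matrix.mul_apply, Matrix.conjTranspose_apply, Fin.sum_univ_two] at h11 hc ⊢
  have hc' : star c = star (N 0 0) * N 0 1 + star (N 1 0) * N 1 1 := by simp [hc]
  have sum_sq : star (N 0 0) * N 0 0 + star (N 1 0) * N 1 0 - star c * c =
      star (N 0 0 - N 0 1 * c) * (N 0 0 - N 0 1 * c) +
        star (N 1 0 - N 1 1 * c) * (N 1 0 - N 1 1 * c) := by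
    calc _ = star (N 0 0) * N 0 0 + star (N 1 0) * N 1 0 - star c * c - star c * c
          + star c * 1 * c := by noncomm_ring
      _ = star (N 0 0) * N 0 0 + star (N 1 0) * N 1 0
          - (star (N 0 0) * N 0 1 + star (N 1 0) * N 1 1) * c
          - star c * (star (N 0 1) * N 0 0 + star (N 1 1) * N 1 0)
          + star c * (star (N 0 1) * N 0 1 + star (N 1 1) * N 1 1) * c := by
            rw [← hc, ← hc', h11]
      _ = _ := by simp only [star_sub, star_mul]; noncomm_ring
  rw [← sub_nonneg, sum_sq]
  exact add_nonneg (star_mul_self_nonneg _) (star_mul_self_nonneg _)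

variable {B : Type*} [CStarAlgebra B] [PartialOrder B] [StarOrderedRing B]

lemma matPos_of_star_mul_self_le {a b : B} (h : star b * b ≤ a) :
    MatPos !![a, star b; b, 1] := by
  obtain ⟨w, hw⟩ := CStarAlgebra.nonneg_iff_eq_star_mul_self.1 (sub_nonneg.2 h)
  obtain rfl : a = star b * b + star w * w := by rw [← hw]; abel
  refine ⟨!![b, 1; w, 0], ?_⟩
  ext i j
  fin_cases i <;> fin_cases j <;> simp [Matrix.mul_apply]

lemma norm_map_le_of_map_matPos {B' : Type*} [CStarAlgebra B'] [PartialOrder B']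
    [StarOrderedRing B'] {S : Submodule ℂ B} (h1S : 1 ∈ S) {Φ : B →ₗ[ℂ] B'} (hΦ1 : Φ 1 = 1)
    (hΦ : ∀ M : Matrix (Fin 2) (Fin 2) B, (∀ i j, M i j ∈ S) → MatPos M → MatPos (M.map Φ))
    {z : B} (hz : z ∈ S) (hz' : star z ∈ S) : ‖Φ z‖ ≤ ‖z‖ := by
  have hM : ∀ i j, !![algebraMap ℝ B (‖z‖ ^ 2), star z; z, 1] i j ∈ S := by
    have hscalar : algebraMap ℝ B (‖z‖ ^ 2) ∈ S := by
      rw [Algebra.algebraMap_eq_smul_one]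
      exact S.smul_of_tower_mem _ h1S
    intro i j
    fin_cases i <;> fin_cases j <;> simpa [-map_pow]
  have hΦscalar : Φ (algebraMap ℝ B (‖z‖ ^ 2)) = algebraMap ℝ B' (‖z‖ ^ 2) := by
    simp only [Algebra.algebraMap_eq_smul_one, Φ.map_smul_of_tower, hΦ1]
  have hle : star (Φ z) * Φ z ≤ algebraMap ℝ B' (‖z‖ ^ 2) := by
    have hpos := hΦ _ hM (matPos_of_star_mul_self_le CStarAlgebra.star_mul_le_algebraMap_norm_sq)
    simpa [-map_pow, hΦscalar] using hpos.star_mul_self_le (by simp [hΦ1])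
  have hsq : ‖star (Φ z) * Φ z‖ ≤ ‖z‖ ^ 2 :=
    (CStarAlgebra.norm_le_iff_le_algebraMap _ (by positivity) (star_mul_self_nonneg _)).2 hle
  rw [CStarRing.norm_star_mul_self, ← sq] at hsq
  exact (sq_le_sq₀ (norm_nonneg _) (norm_nonneg _)).1 hsq

end Contractivity

section PositiveFunctional

lemma nonneg_of_map_nonneg {A B : Type*} [NonUnitalCStarAlgebra A] [PartialOrder A]
    [StarOrderedRing A] [NonUnitalCStarAlgebra B] [PartialOrder B] [StarOrderedRing B]
    {ι : A →⋆ₙₐ[ℂ] B} (hι : Function.Injective ι) {a : A} (ha : 0 ≤ ι a) : 0 ≤ a := by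
  have hsa : IsSelfAdjoint a := hι (by rw [map_star]; exact ha.isSelfAdjoint)
  rw [← CFC.negPart_eq_zero_iff a]
  apply hι
  have : ι a⁻ = (ι a)⁻ := by
    rw [CFC.negPart_def, CFC.negPart_def]
    exact NonUnitalStarAlgHomClass.map_cfcₙ ι _ a
  rw [this, map_zero, CFC.negPart_eq_zero_iff (ι a) ha.isSelfAdjoint]
  exact ha

variable {A : Type*} [NonUnitalCStarAlgebra A] {τ : A →ₗ[ℂ] ℂ}

lemma IsPositiveFunctional.apply_nonneg [PartialOrder A] [StarOrderedRing A]
    (hτ : IsPositiveFunctional τ) {a : A} (ha : 0 ≤ a) : 0 ≤ τ a := by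
  obtain ⟨b, rfl⟩ := CStarAlgebra.nonneg_iff_eq_star_mul_self.1 ha
  exact hτ b

/-- A functional that is nonnegative on the elements `a* a`, as a positive linear map for the
spectral order. -/
def IsPositiveFunctional.toPositiveLinearMap (hτ : IsPositiveFunctional τ) :
    letI := CStarAlgebra.spectralOrder A
    A →ₚ[ℂ] ℂ :=
  letI := CStarAlgebra.spectralOrder A
  letI := CStarAlgebra.spectralOrderedRing A
  PositiveLinearMap.mk₀ τ fun _ ha ↦ hτ.apply_nonneg ha

/-- The `L²`-norm of a positive functional as a seminorm, pulled back from its GNS space. -/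
def IsPositiveFunctional.l2Seminorm (hτ : IsPositiveFunctional τ) : Seminorm ℂ A :=
  letI := CStarAlgebra.spectralOrder A
  letI := CStarAlgebra.spectralOrderedRing A
  (normSeminorm ℂ hτ.toPositiveLinearMap.PreGNS).comp hτ.toPositiveLinearMap.toPreGNS.toLinearMap

lemma IsPositiveFunctional.l2Seminorm_apply (hτ : IsPositiveFunctional τ) (a : A) :
    hτ.l2Seminorm a = l2norm τ a := rfl

lemma IsPositiveFunctional.exists_l2Seminorm_le (hτ : IsPositiveFunctional τ) :
    ∃ C : ℝ, 0 ≤ C ∧ ∀ a, hτ.l2Seminorm a ≤ C * ‖a‖ := by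
  let := CStarAlgebra.spectralOrder A
  have := CStarAlgebra.spectralOrderedRing A
  obtain ⟨C, hC⟩ := hτ.toPositiveLinearMap.exists_norm_apply_le
  refine ⟨√C, Real.sqrt_nonneg _, fun a ↦ ?_⟩
  calc l2norm τ a = √(τ (star a * a)).re := rfl
    _ ≤ √(C * ‖star a * a‖) := Real.sqrt_le_sqrt ((Complex.re_le_norm _).trans (hC _))
    _ = √C * ‖a‖ := by
      rw [CStarRing.norm_star_mul_self, Real.sqrt_mul C.coe_nonneg,
        Real.sqrt_mul_self (norm_nonneg a)]

end PositiveFunctional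

section TendstoZero

variable {𝕜 V I : Type*} [NormedField 𝕜] [SeminormedAddCommGroup V] [NormedSpace 𝕜 V]

/-- The vectors along which a family of seminorms tends to zero. -/
def tendstoZeroSubmodule (q : I → Seminorm 𝕜 V) (l : Filter I) : Submodule 𝕜 V where
  carrier := {x | Tendsto (fun i ↦ q i x) l (nhds 0)}
  zero_mem' := by simpa using tendsto_const_nhds
  add_mem' {x y} hx hy :=
    squeeze_zero (fun i ↦ apply_nonneg (q i) _) (fun i ↦ map_add_le_add (q i) x y)
      (by simpa using hx.add hy)
  smul_mem' c x hx := by simpa [map_smul_eq_mul] using hx.const_mul ‖c‖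

lemma mem_tendstoZeroSubmodule {q : I → Seminorm 𝕜 V} {l : Filter I} {x : V} :
    x ∈ tendstoZeroSubmodule q l ↔ Tendsto (fun i ↦ q i x) l (nhds 0) := Iff.rfl

lemma isClosed_tendstoZeroSubmodule {q : I → Seminorm 𝕜 V} {l : Filter I} {C : ℝ} (hC : 0 ≤ C)
    (hq : ∀ i x, q i x ≤ C * ‖x‖) : IsClosed (tendstoZeroSubmodule q l : Set V) := by
  refine isClosed_of_closure_subset fun x hx ↦ Metric.tendsto_nhds.2 fun ε hε ↦ ?_
  obtain ⟨y, hy, hxy⟩ := Metric.mem_closure_iff.1 hx (ε / 2 / (C + 1)) (by positivity)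
  filter_upwards [Metric.tendsto_nhds.1 hy (ε / 2) (half_pos hε)] with i hi
  rw [Real.dist_0_eq_abs, abs_of_nonneg (apply_nonneg _ _)] at hi ⊢
  rw [dist_eq_norm, lt_div_iff₀ (by positivity)] at hxy
  calc q i x = q i ((x - y) + y) := by rw [sub_add_cancel]
    _ ≤ q i (x - y) + q i y := map_add_le_add _ _ _
    _ ≤ ‖x - y‖ * (C + 1) + q i y := by
      gcongr
      linarith [hq i (x - y), norm_nonneg (x - y)]
    _ < ε := by linarith

lemma tendstoZeroSubmodule_eq_top_of_dense_span {q : I → Seminorm 𝕜 V} {l : Filter I} {C : ℝ}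
    (hC : 0 ≤ C) (hq : ∀ i x, q i x ≤ C * ‖x‖) {s : Set V}
    (hs : Dense (Submodule.span 𝕜 s : Set V)) (hsq : s ⊆ tendstoZeroSubmodule q l) :
    tendstoZeroSubmodule q l = ⊤ := by
  rw [← SetLike.coe_set_eq, Submodule.top_coe, ← (isClosed_tendstoZeroSubmodule hC hq).closure_eq]
  exact (hs.mono (Submodule.span_le.2 hsq)).closure_eq

lemma dense_span_preimage_val {S : Submodule 𝕜 V} {s : Set V} (hsS : s ⊆ S)
    (hS : (S : Set V) ⊆ closure (Submodule.span 𝕜 s)) :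
    Dense (Submodule.span 𝕜 (Subtype.val ⁻¹' s : Set S) : Set S) := by
  intro x
  have hspan : (Subtype.val '' (Submodule.span 𝕜 (Subtype.val ⁻¹' s : Set S) : Set S)) =
      (Submodule.span 𝕜 s : Set V) := by
    rw [← S.coe_subtype, ← Submodule.map_coe, Submodule.map_span, S.coe_subtype,
      Set.image_preimage_eq_of_subset (by simpa using hsS)]
  rw [closure_subtype, hspan]
  exact hS x.2

end TendstoZero

local notation "ℓ²(" G "," H ")" => lp (fun _ : G ↦ H) 2

section CrossedProduct

variable {H : Type*} [NormedAddCommGroup H] [InnerProductSpace ℂ H] {G : Type*}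

lemma lpSingle_apply [DecidableEq G] (t : G) (v : H) :
    lpSingle t v = lp.single (E := fun _ : G ↦ H) 2 t v := by
  simp only [lpSingle, LinearMap.mkContinuous_apply, LinearMap.coe_mk, AddHom.coe_mk]
  congr!

lemma adjoint_lpSingle [CompleteSpace H] (t : G) :
    ContinuousLinearMap.adjoint (lpSingle (H := H) t) = lpEval t := by
  classical
  rw [eq_comm, ContinuousLinearMap.eq_adjoint_iff]
  intro f v
  rw [lpSingle_apply, lp.inner_single_right]
  rfl

variable [Group G]

lemma lam_apply (t : G) (f : ℓ²(G,H)) (s : G) : lam t f s = f (t⁻¹ * s) := rfl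

lemma lam_one : lam (H := H) (1 : G) = 1 := by
  ext f r
  simp [lam_apply]

lemma lam_mul (s t : G) : lam (H := H) (s * t) = lam s * lam t := by
  ext f r
  simp only [mul_apply_eq_comp, lam_apply, _root_.mul_inv_rev, mul_assoc]

variable [CompleteSpace H]

lemma star_lam (t : G) : star (lam (H := H) t) = lam t⁻¹ := by
  rw [ContinuousLinearMap.star_eq_adjoint, eq_comm, ContinuousLinearMap.eq_adjoint_iff]
  intro f g
  rw [lp.inner_eq_tsum, lp.inner_eq_tsum, ← (Equiv.mulLeft t⁻¹).tsum_eq]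
  simp [lam_apply]

variable {A : Type*} [NonUnitalCStarAlgebra A] (ι : A →⋆ₙₐ[ℂ] (H →L[ℂ] H)) (α : G → A ≃⋆ₐ[ℂ] A)

lemma piRep_apply (a : A) (f : ℓ²(G,H)) (s : G) :
    piRep ι α a f s = ι (α s⁻¹ a) (f s) := rfl

lemma piRep_sub (a b : A) : piRep ι α (a - b) = piRep ι α a - piRep ι α b :=
  (piRepLin ι α).map_sub a b

lemma piRep_mul (a b : A) : piRep ι α (a * b) = piRep ι α a * piRep ι α b := by
  ext f s
  simp only [mul_apply_eq_comp, piRep_apply, map_mul]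

lemma piRep_star (a : A) : piRep ι α (star a) = star (piRep ι α a) := by
  rw [ContinuousLinearMap.star_eq_adjoint, ContinuousLinearMap.eq_adjoint_iff]
  intro f g
  simp only [lp.inner_eq_tsum, piRep_apply, map_star, ContinuousLinearMap.star_eq_adjoint,
    ContinuousLinearMap.adjoint_inner_left]

/-- The operators `π(a) λ_t`, whose span is dense in the reduced crossed product. -/
def crossedGenerators : Set (ℓ²(G,H) →L[ℂ] ℓ²(G,H)) :=
  {x | ∃ (a : A) (t : G), x = piRep ι α a * lam t}

lemma crossedGenerators_subset_crossedSet : crossedGenerators ι α ⊆ CrossedSet ι α :=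
  Submodule.subset_span.trans subset_closure

lemma piRep_mul_lam_mem_crossedSet (a : A) (t : G) : piRep ι α a * lam t ∈ CrossedSet ι α :=
  crossedGenerators_subset_crossedSet ι α ⟨a, t, rfl⟩

lemma piRep_mem_crossedSet (a : A) : piRep ι α a ∈ CrossedSet ι α := by
  simpa only [lam_one, mul_one] using piRep_mul_lam_mem_crossedSet ι α a 1

variable {α}

lemma lam_mul_piRep (hα : IsAction α) (t : G) (a : A) :
    lam t * piRep ι α a = piRep ι α (α t a) * lam t := by
  ext f s
  simp only [mul_apply_eq_comp, piRep_apply, lam_apply]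
  rw [← hα.2, _root_.mul_inv_rev, inv_inv]

lemma piRep_mul_lam_mul_piRep_mul_lam (hα : IsAction α) (a b : A) (s t : G) :
    piRep ι α a * lam s * (piRep ι α b * lam t) = piRep ι α (a * α s b) * lam (s * t) :=
  calc piRep ι α a * lam s * (piRep ι α b * lam t)
    _ = piRep ι α a * (lam s * piRep ι α b) * lam t := by simp only [mul_assoc]
    _ = piRep ι α (a * α s b) * lam (s * t) := by
      rw [lam_mul_piRep ι hα, piRep_mul, lam_mul]
      simp only [mul_assoc]

lemma star_piRep_mul_lam (hα : IsAction α) (a : A) (t : G) :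
    star (piRep ι α a * lam t) = piRep ι α (α t⁻¹ (star a)) * lam t⁻¹ := by
  rw [star_mul, star_lam, ← piRep_star, lam_mul_piRep ι hα]

lemma star_mul_self_piRep_mul_lam (hα : IsAction α) (a : A) (t : G) :
    star (piRep ι α a * lam t) * (piRep ι α a * lam t) = piRep ι α (α t⁻¹ (star a * a)) := by
  rw [star_piRep_mul_lam ι hα, piRep_mul_lam_mul_piRep_mul_lam ι hα, inv_mul_cancel, lam_one,
    mul_one, map_mul]

/-- The algebraic crossed product: the span of the operators `π(a) λ_t`, which is closed under
products and adjoints by covariance. -/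
def algCrossedProduct (hα : IsAction α) :
    NonUnitalStarSubalgebra ℂ (ℓ²(G,H) →L[ℂ] ℓ²(G,H)) where
  __ := Submodule.span ℂ (crossedGenerators ι α)
  mul_mem' {x y} hx hy := by
    have hxy := Submodule.mul_mem_mul hx hy
    rw [Submodule.span_mul_span] at hxy
    refine Submodule.span_mono ?_ hxy
    rintro _ ⟨_, ⟨a, s, rfl⟩, _, ⟨b, t, rfl⟩, rfl⟩
    exact ⟨_, _, piRep_mul_lam_mul_piRep_mul_lam ι hα a b s t⟩
  star_mem' {x} hx := by
    induction hx using Submodule.span_induction with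
    | mem x hx =>
      obtain ⟨a, t, rfl⟩ := hx
      exact Submodule.subset_span ⟨_, _, star_piRep_mul_lam ι hα a t⟩
    | zero => rw [star_zero]; exact Submodule.zero_mem _
    | add x y _ _ hx hy => rw [star_add]; exact Submodule.add_mem _ hx hy
    | smul c x _ hx => rw [star_smul]; exact Submodule.smul_mem _ _ hx

/-- The reduced crossed product `CrossedSet ι α` as a `*`-subalgebra of the operators on
`ℓ²(G, H)`. -/
def crossedProduct (hα : IsAction α) :
    NonUnitalStarSubalgebra ℂ (ℓ²(G,H) →L[ℂ] ℓ²(G,H)) :=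
  (algCrossedProduct ι hα).topologicalClosure

variable (hα : IsAction α)

instance isClosed_crossedProduct :
    IsClosed (crossedProduct ι hα : Set (ℓ²(G,H) →L[ℂ] ℓ²(G,H))) :=
  (algCrossedProduct ι hα).isClosed_topologicalClosure

lemma dense_span_crossedGenerators :
    Dense (Submodule.span ℂ (Subtype.val ⁻¹' crossedGenerators ι α : Set (crossedProduct ι hα)) :
      Set (crossedProduct ι hα)) :=
  dense_span_preimage_val (S := (crossedProduct ι hα).toSubmodule)
    (crossedGenerators_subset_crossedSet ι α) subset_rfl

variable (τ : A →ₗ[ℂ] ℂ) (E : (ℓ²(G,H) →L[ℂ] ℓ²(G,H)) →ₗ[ℂ] A)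

/-- The functional `τ' = τ ∘ E` on the reduced crossed product. -/
def crossedFunctional : crossedProduct ι hα →ₗ[ℂ] ℂ :=
  τ ∘ₗ E ∘ₗ (crossedProduct ι hα).toSubmodule.subtype

variable {ι τ E}

lemma IsCondExp.apply_star_mul_self_nonneg [PartialOrder A] [StarOrderedRing A]
    (hE : IsCondExp ι α E) (hα : IsAction α) (hι : Function.Injective ι)
    {x : ℓ²(G,H) →L[ℂ] ℓ²(G,H)} (hx : x ∈ CrossedSet ι α) :
    0 ≤ E (star x * x) := by
  have hxx : star x * x ∈ crossedProduct ι hα := mul_mem (star_mem hx) hx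
  apply nonneg_of_map_nonneg hι
  rw [hE _ hxx, ContinuousLinearMap.nonneg_iff_isPositive, ← adjoint_lpSingle]
  exact ((ContinuousLinearMap.nonneg_iff_isPositive _).1 (star_mul_self_nonneg x)).adjoint_conj _

lemma isPositiveFunctional_crossedFunctional (hι : Function.Injective ι)
    (hτ : IsPositiveFunctional τ) (hE : IsCondExp ι α E) :
    IsPositiveFunctional (crossedFunctional ι hα τ E) := fun x ↦
  let := CStarAlgebra.spectralOrder A
  have := CStarAlgebra.spectralOrderedRing A
  hτ.apply_nonneg (hE.apply_star_mul_self_nonneg hα hι x.2)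

lemma lpEval_comp_piRep_comp_lpSingle (hα : IsAction α) (a : A) :
    lpEval (1 : G) ∘L piRep ι α a ∘L lpSingle (1 : G) = ι a := by
  classical
  ext v
  change piRep ι α a (lpSingle 1 v) 1 = ι a v
  rw [piRep_apply, lpSingle_apply, lp.single_apply_self, inv_one, hα.1]

lemma IsCondExp.apply_piRep (hE : IsCondExp ι α E) (hα : IsAction α)
    (hι : Function.Injective ι) (a : A) : E (piRep ι α a) = a :=
  hι <| by rw [hE _ (piRep_mem_crossedSet ι α a), lpEval_comp_piRep_comp_lpSingle hα]

lemma l2normCr_piRep_mul_lam (hι : Function.Injective ι) (hα : IsAction α)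
    (hτα : ∀ t a, τ (α t a) = τ a) (hE : IsCondExp ι α E) (a : A) (t : G) :
    l2normCr τ E (piRep ι α a * lam t) = l2norm τ a := by
  rw [l2normCr, star_mul_self_piRep_mul_lam ι hα, hE.apply_piRep hα hι, hτα, l2norm]

variable {F : G → A →ₗ[ℂ] A}
  {Φ : (ℓ²(G,H) →L[ℂ] ℓ²(G,H)) →ₗ[ℂ] (ℓ²(G,H) →L[ℂ] ℓ²(G,H))}

lemma l2normCr_map_sub_piRep_mul_lam (hι : Function.Injective ι) (hα : IsAction α)
    (hτα : ∀ t a, τ (α t a) = τ a) (hE : IsCondExp ι α E) (hgen : HSGenProp ι α F Φ)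
    (a : A) (t : G) :
    l2normCr τ E (Φ (piRep ι α a * lam t) - piRep ι α a * lam t) = l2norm τ (F t a - a) := by
  rw [hgen, ← sub_mul, ← piRep_sub, l2normCr_piRep_mul_lam hι hα hτα hE]

/-- The map `Φ - id` as an endomorphism of the reduced crossed product. -/
def CPOnCrossed.subId (hΦ : CPOnCrossed ι α Φ) :
    crossedProduct ι hα →ₗ[ℂ] crossedProduct ι hα :=
  (Φ - LinearMap.id).restrict (p := (crossedProduct ι hα).toSubmodule)
    (q := (crossedProduct ι hα).toSubmodule) fun x hx ↦ sub_mem (hΦ.1 x hx) hx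

lemma CPOnCrossed.l2norm_subId_apply (hΦ : CPOnCrossed ι α Φ) (x : crossedProduct ι hα) :
    l2norm (crossedFunctional ι hα τ E) (hΦ.subId hα x) = l2normCr τ E (Φ x - x) := rfl

end CrossedProduct

section Multiplier

variable {H : Type*} [NormedAddCommGroup H] [InnerProductSpace ℂ H] [CompleteSpace H]
  {A : Type*} [CStarAlgebra A] {G : Type*} [Group G]
  {ι : A →⋆ₙₐ[ℂ] (H →L[ℂ] H)} {α : G → A ≃⋆ₐ[ℂ] A}

lemma piRep_one (hι1 : ι 1 = 1) : piRep ι α 1 = 1 := by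
  ext f r
  simp [piRep_apply, hι1]

lemma one_mem_crossedSet (hι1 : ι 1 = 1) : 1 ∈ CrossedSet ι α :=
  piRep_one (α := α) hι1 ▸ piRep_mem_crossedSet ι α 1

variable {F : G → A →ₗ[ℂ] A}
  {Φ : (ℓ²(G,H) →L[ℂ] ℓ²(G,H)) →ₗ[ℂ] (ℓ²(G,H) →L[ℂ] ℓ²(G,H))}

lemma HSGenProp.map_one (hgen : HSGenProp ι α F Φ) (hι1 : ι 1 = 1) (hF1 : F 1 1 = 1) :
    Φ 1 = 1 := by
  simpa only [lam_one, mul_one, piRep_one hι1, hF1] using hgen 1 1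

lemma CPOnCrossed.norm_apply_le (hΦ : CPOnCrossed ι α Φ) (hα : IsAction α) (hι1 : ι 1 = 1)
    (hΦ1 : Φ 1 = 1) {x : ℓ²(G,H) →L[ℂ] ℓ²(G,H)}
    (hx : x ∈ CrossedSet ι α) : ‖Φ x‖ ≤ ‖x‖ :=
  norm_map_le_of_map_matPos (S := (crossedProduct ι hα).toSubmodule) (one_mem_crossedSet hι1) hΦ1
    (hΦ.2 2) hx (show star x ∈ crossedProduct ι hα from star_mem hx)

lemma CPOnCrossed.norm_subId_apply_le (hΦ : CPOnCrossed ι α Φ) (hα : IsAction α)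
    (hι1 : ι 1 = 1) (hΦ1 : Φ 1 = 1) (x : crossedProduct ι hα) :
    ‖hΦ.subId hα x‖ ≤ 2 * ‖x‖ :=
  calc ‖hΦ.subId hα x‖ = ‖Φ x - x‖ := rfl
    _ ≤ ‖Φ x‖ + ‖(x : ℓ²(G,H) →L[ℂ] ℓ²(G,H))‖ := norm_sub_le _ _
    _ ≤ ‖x‖ + ‖x‖ := by gcongr; exacts [hΦ.norm_apply_le hα hι1 hΦ1 x.2, le_rfl]
    _ = 2 * ‖x‖ := (two_mul _).symm

lemma CPOnCrossed.tendsto_l2normCr_of_generators {τ : A →ₗ[ℂ] ℂ}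
    {E : (ℓ²(G,H) →L[ℂ] ℓ²(G,H)) →ₗ[ℂ] A}
    {I : Type*} {l : Filter I}
    {Φ : I → (ℓ²(G,H) →L[ℂ] ℓ²(G,H)) →ₗ[ℂ] (ℓ²(G,H) →L[ℂ] ℓ²(G,H))}
    (hΦ : ∀ i, CPOnCrossed ι α (Φ i)) (hΦ1 : ∀ i, Φ i 1 = 1) (hι1 : ι 1 = 1) (hα : IsAction α)
    (hτ' : IsPositiveFunctional (crossedFunctional ι hα τ E))
    (h : ∀ x ∈ crossedGenerators ι α,
      Tendsto (fun i ↦ l2normCr τ E (Φ i x - x)) l (nhds 0))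
    {x : ℓ²(G,H) →L[ℂ] ℓ²(G,H)} (hx : x ∈ CrossedSet ι α) :
    Tendsto (fun i ↦ l2normCr τ E (Φ i x - x)) l (nhds 0) := by
  let q (i : I) : Seminorm ℂ (crossedProduct ι hα) := hτ'.l2Seminorm.comp ((hΦ i).subId hα)
  have q_apply (i : I) (y : crossedProduct ι hα) : q i y = l2normCr τ E (Φ i y - y) := by
    rw [← (hΦ i).l2norm_subId_apply hα, ← hτ'.l2Seminorm_apply, Seminorm.comp_apply]
  obtain ⟨C, hC, hle⟩ := hτ'.exists_l2Seminorm_le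
  have hq (i : I) (y : crossedProduct ι hα) : q i y ≤ C * 2 * ‖y‖ :=
    calc q i y ≤ C * ‖(hΦ i).subId hα y‖ := hle _
      _ ≤ C * (2 * ‖y‖) := by
        gcongr
        exact (hΦ i).norm_subId_apply_le hα hι1 (hΦ1 i) y
      _ = C * 2 * ‖y‖ := (mul_assoc _ _ _).symm
  have htop : tendstoZeroSubmodule q l = ⊤ :=
    tendstoZeroSubmodule_eq_top_of_dense_span (by positivity) hq
      (dense_span_crossedGenerators ι hα) fun y hy ↦ by
        simpa only [SetLike.mem_coe, mem_tendstoZeroSubmodule, q_apply] using h y hy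
  have hxq : (⟨x, hx⟩ : crossedProduct ι hα) ∈ tendstoZeroSubmodule q l :=
    htop ▸ Submodule.mem_top
  simpa only [mem_tendstoZeroSubmodule, q_apply] using hxq

end Multiplier

theorem SF_L2_convergence_iff_general
    {H : Type*} [NormedAddCommGroup H] [InnerProductSpace ℂ H] [CompleteSpace H]
    {A : Type*} [CStarAlgebra A] {G : Type*} [Group G]
    {ι : A →⋆ₙₐ[ℂ] (H →L[ℂ] H)} (hι : Function.Injective ι) (hι1 : ι 1 = 1)
    {α : G → A ≃⋆ₐ[ℂ] A} (hα : IsAction α)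
    {τ : A →ₗ[ℂ] ℂ} (hτ : IsPositiveFunctional τ) (hτα : ∀ (t : G) (a : A), τ (α t a) = τ a)
    {E : (ℓ²(G,H) →L[ℂ] ℓ²(G,H)) →ₗ[ℂ] A} (hE : IsCondExp ι α E)
    {I : Type*} (l : Filter I) {F : I → G → A →ₗ[ℂ] A}
    {Φ : I → (ℓ²(G,H) →L[ℂ] ℓ²(G,H)) →ₗ[ℂ] (ℓ²(G,H) →L[ℂ] ℓ²(G,H))}
    (hgen : ∀ i, HSGenProp ι α (F i) (Φ i)) (hCP : ∀ i, CPOnCrossed ι α (Φ i))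
    (hunital : ∀ i, F i 1 1 = 1) :
    (∀ x ∈ CrossedSet ι α, Tendsto (fun i ↦ l2normCr τ E (Φ i x - x)) l (nhds 0)) ↔
      ∀ (t : G) (a : A), Tendsto (fun i ↦ l2norm τ (F i t a - a)) l (nhds 0) := by
  have norm_generator (i : I) (a : A) (t : G) :=
    l2normCr_map_sub_piRep_mul_lam hι hα hτα hE (hgen i) a t
  refine ⟨fun h t a ↦ ?_, fun h x hx ↦ ?_⟩
  · simpa only [norm_generator] using h _ (piRep_mul_lam_mem_crossedSet ι α a t)
  refine CPOnCrossed.tendsto_l2normCr_of_generators hCP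
    (fun i ↦ (hgen i).map_one hι1 (hunital i)) hι1 hα
    (isPositiveFunctional_crossedFunctional hα hι hτ hE) ?_ hx
  rintro _ ⟨a, t, rfl⟩
  simpa only [norm_generator] using h t a

/-- **Lemma 3.7.** Let `(F_i)` be a net of completely positive Herz-Schur
`(A,G,α)`-multipliers (with completely positive extensions `Φ_i = S_{F_i}` to
`A ⋊_{α,r} G`) such that every `F_i(e)` is unital and `τ ∘ F_i(e) ≤ τ`.  Then
`‖S_{F_i}(x) − x‖_{2,τ'} → 0` for every `x ∈ A ⋊_{α,r} G` if and only if
`‖F_i(t)(a) − a‖_{2,τ} → 0` for all `t ∈ G` and `a ∈ A`. -/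
theorem SF_L2_convergence_iff
    {H : Type*} [NormedAddCommGroup H] [InnerProductSpace ℂ H] [CompleteSpace H]
    {A : Type*} [CStarAlgebra A] {G : Type*} [Group G]
    (ι : A →⋆ₙₐ[ℂ] (H →L[ℂ] H)) (hisom : ∀ a : A, ‖ι a‖ = ‖a‖)
    (hnd : NondegenerateRep ι) (hι1 : ι 1 = 1)
    (α : G → A ≃⋆ₐ[ℂ] A) (hα : IsAction α)
    (τ : A →ₗ[ℂ] ℂ) (hτpos : IsPositiveFunctional τ) (hτtr : IsTracial τ)
    (hτf : IsFaithfulFunctional τ) (hτ1 : τ 1 = 1)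
    (hτα : ∀ (t : G) (a : A), τ (α t a) = τ a)
    (E : (lp (fun _ : G => H) 2 →L[ℂ] lp (fun _ : G => H) 2) →ₗ[ℂ] A)
    (hE : IsCondExp ι α E)
    (I : Type*) [Nonempty I] [SemilatticeSup I]
    (F : I → G → (A →ₗ[ℂ] A))
    (Φ : I → ((lp (fun _ : G => H) 2 →L[ℂ] lp (fun _ : G => H) 2) →ₗ[ℂ]
              (lp (fun _ : G => H) 2 →L[ℂ] lp (fun _ : G => H) 2)))
    (hgen : ∀ i, HSGenProp ι α (F i) (Φ i))
    (hCP : ∀ i, CPOnCrossed ι α (Φ i))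
    (hunital : ∀ i, F i 1 1 = 1)
    (hτF : ∀ i (a : A), τ (F i 1 (star a * a)) ≤ τ (star a * a)) :
    (∀ x ∈ CrossedSet ι α,
        Tendsto (fun i => l2normCr τ E (Φ i x - x)) atTop (nhds 0)) ↔
    (∀ (t : G) (a : A),
        Tendsto (fun i => l2norm τ (F i t a - a)) atTop (nhds 0)) := by
  exact SF_L2_convergence_iff_general (AddMonoidHomClass.isometry_of_norm ι hisom).injective hι1 hα
    hτpos hτα hE atTop hgen hCP hunital

end
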